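/- Suppose λ is a multicore. Then λ lies in a core block (i.e., w(λ) is minimal among the weights of all multipartitions having the same hub as λ) if and only if there exists a multicharge a' = (a'_1,…,a'_r) ∈ ℤ^r with a'_j ≡ a_j (mod e) for all j such that |γ^{jk}_i(λ)| = |ℓ^{a'}_{ij}(λ) − ℓ^{a'}_{ik}(λ)| ≤ 1 for every i ∈ {0,…,e−1} and all j,k ∈ {1,…,r}. -/

import Mathlib

/-!
Combinatorial framework for multipartitions, residues, β-sets, abacus levels,
weights, hubs, core blocks and Scopes-type moves, following Fayers and the paper.
Rows and columns of Young diagrams are indexed from 0, so the node in row `b`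
and column `c` (0-based) of component `j` has residue `a j + c - b` mod `e`.
-/

open scoped Classical

namespace AK

/-- A partition, given by its (antitone, finitely supported) sequence of parts,
rows indexed from `0`. -/
structure PartitionFun : Type where
  part : ℕ → ℕ
  antitone : Antitone part
  finite_support : ∃ N, ∀ b, N ≤ b → part b = 0

/-- The node in row `b`, column `c` (0-based) belongs to the Young diagram. -/
def PartitionFun.InDiag (lam : PartitionFun) (b c : ℕ) : Prop := c < lam.part b

/-- The node `(b,c)` is removable: deleting it leaves the diagram of a partition. -/
def PartitionFun.Removable (lam : PartitionFun) (b c : ℕ) : Prop :=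
  lam.part b = c + 1 ∧ lam.part (b + 1) ≤ c

/-- The node `(b,c)` is addable: adjoining it gives the diagram of a partition. -/
def PartitionFun.Addable (lam : PartitionFun) (b c : ℕ) : Prop :=
  lam.part b = c ∧ (b = 0 ∨ lam.part b < lam.part (b - 1))

/-- An `r`-multipartition. -/
abbrev Multipartition (r : ℕ) := Fin r → PartitionFun

/-- Nodes: `(b, c, j)` with row `b`, column `c`, component `j`. -/
abbrev Node (r : ℕ) := ℕ × ℕ × Fin r

/-- The Young diagram of a multipartition, as a set of nodes. -/
def diag {r : ℕ} (lam : Multipartition r) : Set (Node r) :=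
  {x | (lam x.2.2).InDiag x.1 x.2.1}

/-- The size `n` of a multipartition of `n`. -/
noncomputable def msize {r : ℕ} (lam : Multipartition r) : ℕ :=
  Set.ncard (diag lam)

/-- `c_i(λ)`: the number of nodes of residue `i` (mod `e`). -/
noncomputable def nodeCount {r : ℕ} (e : ℕ) (a : Fin r → ℤ) (lam : Multipartition r)
    (i : ℤ) : ℕ :=
  Set.ncard {x : Node r | (lam x.2.2).InDiag x.1 x.2.1 ∧
    (a x.2.2 + (x.2.1 : ℤ) - (x.1 : ℤ)) % (e : ℤ) = i % e}

/-- Number of removable nodes of residue `i` in component `j`. -/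
noncomputable def removableCount {r : ℕ} (e : ℕ) (a : Fin r → ℤ) (lam : Multipartition r)
    (i : ℤ) (j : Fin r) : ℕ :=
  Set.ncard {p : ℕ × ℕ | (lam j).Removable p.1 p.2 ∧
    (a j + (p.2 : ℤ) - (p.1 : ℤ)) % (e : ℤ) = i % e}

/-- Number of addable nodes of residue `i` in component `j`. -/
noncomputable def addableCount {r : ℕ} (e : ℕ) (a : Fin r → ℤ) (lam : Multipartition r)
    (i : ℤ) (j : Fin r) : ℕ :=
  Set.ncard {p : ℕ × ℕ | (lam j).Addable p.1 p.2 ∧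
    (a j + (p.2 : ℤ) - (p.1 : ℤ)) % (e : ℤ) = i % e}

/-- `δ^j_i(λ)` = (removable `i`-nodes of component `j`) − (addable `i`-nodes of component `j`). -/
noncomputable def delta {r : ℕ} (e : ℕ) (a : Fin r → ℤ) (lam : Multipartition r)
    (i : ℤ) (j : Fin r) : ℤ :=
  (removableCount e a lam i j : ℤ) - (addableCount e a lam i j : ℤ)

/-- The hub `δ_i(λ) = Σ_j δ^j_i(λ)`. -/
noncomputable def hub {r : ℕ} (e : ℕ) (a : Fin r → ℤ) (lam : Multipartition r) (i : ℤ) : ℤ :=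
  ∑ j : Fin r, delta e a lam i j

/-- Two multipartitions have the same hub. -/
def SameHub {r : ℕ} (e : ℕ) (a : Fin r → ℤ) (lam mu : Multipartition r) : Prop :=
  ∀ i : ℤ, hub e a lam i = hub e a mu i

/-- `d_i(m) = min { δ^j_i(m) : 1 ≤ j ≤ r }`. -/
noncomputable def dmin {r : ℕ} (e : ℕ) (a : Fin r → ℤ) (lam : Multipartition r) (i : ℤ) : ℤ :=
  sInf {x : ℤ | ∃ j : Fin r, delta e a lam i j = x}

/-- The weight `w(λ) = Σ_j c_{a_j}(λ) − (1/2) Σ_{i∈ℤ/eℤ} (c_i(λ) − c_{i+1}(λ))²`. -/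
noncomputable def weight {r : ℕ} (e : ℕ) (a : Fin r → ℤ) (lam : Multipartition r) : ℚ :=
  (∑ j : Fin r, (nodeCount e a lam (a j) : ℚ)) -
    (1 / 2 : ℚ) * ∑ i ∈ Finset.range e,
      ((nodeCount e a lam (i : ℤ) : ℚ) - (nodeCount e a lam ((i : ℤ) + 1) : ℚ)) ^ 2

/-- The β-set `B^j = {λ_b + a_j − b : b ≥ 1}` (here with rows indexed from 0). -/
def betaSet (aj : ℤ) (lam : PartitionFun) : Set ℤ :=
  {x | ∃ b : ℕ, x = (lam.part b : ℤ) + aj - ((b : ℤ) + 1)}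

/-- A partition is an `e`-core: `β ∈ B` implies `β − e ∈ B`. -/
def IsECore (e : ℕ) (aj : ℤ) (lam : PartitionFun) : Prop :=
  ∀ x ∈ betaSet aj lam, x - (e : ℤ) ∈ betaSet aj lam

/-- A multicore: all components are `e`-cores. -/
def IsMulticore {r : ℕ} (e : ℕ) (a : Fin r → ℤ) (lam : Multipartition r) : Prop :=
  ∀ j, IsECore e (a j) (lam j)

/-- `ℓ^a_{ij}(λ)`: the level of the lowest bead on runner `i`, i.e. the largest `x`
with `x·e + i` in the β-set. -/
noncomputable def level (e : ℕ) (aj : ℤ) (lam : PartitionFun) (i : ℕ) : ℤ :=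
  sSup {x : ℤ | x * (e : ℤ) + (i : ℤ) ∈ betaSet aj lam}

/-- `γ^{jk}_i(λ) = ℓ^a_{ij}(λ) − ℓ^a_{ik}(λ)`. -/
noncomputable def gamma {r : ℕ} (e : ℕ) (a : Fin r → ℤ) (lam : Multipartition r)
    (i : ℕ) (j k : Fin r) : ℤ :=
  level e (a j) (lam j) i - level e (a k) (lam k) i

/-- `γ^{jk}_{il}(λ) = γ^{jk}_i(λ) − γ^{jk}_l(λ)`. -/
noncomputable def gammaD {r : ℕ} (e : ℕ) (a : Fin r → ℤ) (lam : Multipartition r)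
    (i l : ℕ) (j k : Fin r) : ℤ :=
  gamma e a lam i j k - gamma e a lam l j k

/-- Move a bead from runner `i` to runner `l` in the β-set `S`: replace the largest
element of `S` congruent to `i` mod `e` by the smallest integer congruent to `l`
mod `e` not in `S`. -/
noncomputable def moveBead (e : ℕ) (i l : ℕ) (S : Set ℤ) : Set ℤ :=
  insert (sInf {x : ℤ | x % (e : ℤ) = (l : ℤ) % e ∧ x ∉ S})
    (S \ {sSup {x : ℤ | x % (e : ℤ) = (i : ℤ) % e ∧ x ∈ S}})

/-- The effect of `s^{jk}_{il}` on the tuple of β-sets: move a bead from runner `i`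
to runner `l` in component `j`, and from runner `l` to runner `i` in component `k`. -/
noncomputable def swapSets {r : ℕ} (e i l : ℕ) (j k : Fin r) (S : Fin r → Set ℤ) :
    Fin r → Set ℤ :=
  Function.update (Function.update S j (moveBead e i l (S j))) k
    (moveBead e l i (Function.update S j (moveBead e i l (S j)) k))

/-- `m' = s^{jk}_{il}(m)`, expressed via β-sets. -/
def IsSwap {r : ℕ} (e : ℕ) (a : Fin r → ℤ) (i l : ℕ) (j k : Fin r)
    (m m' : Multipartition r) : Prop :=
  ∀ j', betaSet (a j') (m' j') = swapSets e i l j k (fun t => betaSet (a t) (m t)) j'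

/-- `λ` lies in a core block: its weight is minimal among the weights of all
multipartitions with the same hub. -/
def MinimalWeight {r : ℕ} (e : ℕ) (a : Fin r → ℤ) (lam : Multipartition r) : Prop :=
  ∀ mu : Multipartition r, SameHub e a lam mu → weight e a lam ≤ weight e a mu

/-- `(b_0,…,b_{e−1})` is a base tuple for `mu` with respect to the multicharge `a'`
(congruent to `a` componentwise mod `e`): each `ℓ^{a'}_{ij}(mu)` is `b i` or `b i + 1`. -/
def IsBaseTuple {r : ℕ} (e : ℕ) (a : Fin r → ℤ) (mu : Multipartition r)
    (a' : Fin r → ℤ) (b : ℕ → ℤ) : Prop :=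
  (∀ j, (e : ℤ) ∣ (a' j - a j)) ∧
    ∀ i < e, ∀ j, level e (a' j) (mu j) i = b i ∨ level e (a' j) (mu j) i = b i + 1

/-- `K_i(C)` for the core block of `mu`: among all base tuples (over all admissible
multicharges), take `b i` maximal and then `b (i−1)` minimal, and set
`K_i = b_i − b_{i−1} − 1` for `i ≠ 0`, `K_0 = b_0 − b_{e−1} − 2`. -/
noncomputable def Kconst {r : ℕ} (e : ℕ) (a : Fin r → ℤ) (mu : Multipartition r)
    (i : ℕ) : ℤ :=
  let Bi : ℤ := sSup {x : ℤ | ∃ a' bt, IsBaseTuple e a mu a' bt ∧ bt i = x}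
  let iprev : ℕ := if i = 0 then e - 1 else i - 1
  let Bp : ℤ := sInf {x : ℤ | ∃ a' bt, IsBaseTuple e a mu a' bt ∧ bt i = Bi ∧ bt iprev = x}
  Bi - Bp - (if i = 0 then 2 else 1)

/-- The map `φ_i : ℤ → ℤ`. -/
def phiMap (e i : ℕ) (x : ℤ) : ℤ :=
  if x % (e : ℤ) = ((i : ℤ) - 1) % e then x + 1
  else if x % (e : ℤ) = (i : ℤ) % e then x - 1
  else x

/-- Lexicographic order on multipartitions: `λ > μ`. -/
def lexGT {r : ℕ} (lam mu : Multipartition r) : Prop :=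
  ∃ j : Fin r, (∀ j' < j, (lam j').part = (mu j').part) ∧
    ∃ i : ℕ, (∀ i' < i, (lam j).part i' = (mu j).part i') ∧
      (mu j).part i < (lam j).part i

/-- `x` is above `y`: `j < j'` or (`j = j'` and `b < b'`). -/
def NodeAbove {r : ℕ} (x y : Node r) : Prop :=
  x.2.2 < y.2.2 ∨ (x.2.2 = y.2.2 ∧ x.1 < y.1)

/-- The order on nodes: `x < y` iff `y` is above `x`. -/
def NodeLT {r : ℕ} (x y : Node r) : Prop := NodeAbove y x

/-- `N_A(λ)` = (addable `i`-nodes of `λ` below `A`) − (removable `i`-nodes of `λ` below `A`). -/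
noncomputable def Nfac {r : ℕ} (e : ℕ) (a : Fin r → ℤ) (lam : Multipartition r)
    (i : ℤ) (A : Node r) : ℤ :=
  (Set.ncard {y : Node r | (lam y.2.2).Addable y.1 y.2.1 ∧
      (a y.2.2 + (y.2.1 : ℤ) - (y.1 : ℤ)) % (e : ℤ) = i % e ∧ NodeAbove A y} : ℤ) -
  (Set.ncard {y : Node r | (lam y.2.2).Removable y.1 y.2.1 ∧
      (a y.2.2 + (y.2.1 : ℤ) - (y.1 : ℤ)) % (e : ℤ) = i % e ∧ NodeAbove A y} : ℤ)

/-- `lam` is obtained from `mu` by adding one `e`-rim hook to some component: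
on β-sets, some `β ∈ B^j` with `β + e ∉ B^j` is replaced by `β + e`. -/
def AddRimHook {r : ℕ} (e : ℕ) (a : Fin r → ℤ) (mu lam : Multipartition r) : Prop :=
  ∃ (j : Fin r) (β : ℤ), β ∈ betaSet (a j) (mu j) ∧ β + (e : ℤ) ∉ betaSet (a j) (mu j) ∧
    betaSet (a j) (lam j) = insert (β + (e : ℤ)) (betaSet (a j) (mu j) \ {β}) ∧
    ∀ j' ≠ j, betaSet (a j') (lam j') = betaSet (a j') (mu j')

/-- The number of inversions (length) of a permutation of `Fin d`. -/
noncomputable def permLength (d : ℕ) (σ : Equiv.Perm (Fin d)) : ℕ :=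
  (Finset.univ.filter (fun p : Fin d × Fin d => p.1 < p.2 ∧ σ p.2 < σ p.1)).card

/-!
On the abacus with `e` runners, the hub records how many beads lie on each runner in all
components together. Among multipartitions with the same hub, the weight is, up to a constant,
`r` times the sum of the levels of all beads. Pushing beads up their runners keeps the hub and
lowers this sum, so only multicores matter, and a multicore is the same thing as the table of its
levels `ℓ_{ij}`: the row sums are its hub, the column sums are the charges, and half the sum of the
squares is its level sum up to a constant. Hence `λ` lies in a core block iff its table minimises
the sum of squares among the integer tables with the same row and column sums.

Replacing `a_j` by `a_j - t_j e` subtracts `t_j` from column `j`. If the entries of each row then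
differ by at most one, the sum of squares is minimal by convexity. Conversely, consider the
complete digraph on the columns in which `j → k` has length `min_i (ℓ_{ik} - ℓ_{ij}) + 1`. A cycle
of negative length would give a cyclic exchange of units between columns lowering the sum of
squares, so shortest path lengths exist, and they serve as the shifts `t_j`.
-/

section Potential

variable {κ M : Type*} [AddCommMonoid M] (W : κ → κ → M)

/-- The total weight of the walk through the vertices of a list, where the step from `x` to `y`
has weight `W x y`. -/
def pathWeight : List κ → M
  | [] => 0
  | [_] => 0
  | x :: y :: l => W x y + pathWeight (y :: l)

lemma pathWeight_append_cons (p q : List κ) (k : κ) :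
    pathWeight W (p ++ k :: q) = pathWeight W (p ++ [k]) + pathWeight W (k :: q) := by
  induction p with
  | nil => simp [pathWeight]
  | cons x p ih =>
    cases p with
    | nil => simp [pathWeight]
    | cons y p =>
      simp only [List.cons_append, pathWeight] at ih ⊢
      rw [ih, add_assoc]

lemma pathWeight_cons_eq_sum_zipWith (x : κ) (l : List κ) :
    pathWeight W (x :: l) = (List.zipWith W (x :: l) l).sum := by
  induction l generalizing x with
  | nil => simp [pathWeight]
  | cons y l ih => simp [pathWeight, ih]

variable [Fintype κ]

lemma sum_formPerm_eq_pathWeight (hW : ∀ x, W x x = 0) {x : κ} {l : List κ}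
    (hl : (x :: l).Nodup) :
    ∑ y, W y ((x :: l).formPerm y) = pathWeight W (x :: (l ++ [x])) := by
  have hnext : (x :: l).map (x :: l).formPerm = l ++ [x] := by
    rw [← List.rotate_zero (l ++ [x]), ← List.rotate_cons_succ, zero_add]
    refine List.ext_getElem (by simp) fun m h₁ h₂ => ?_
    rw [List.getElem_map, List.formPerm_apply_getElem _ hl, List.getElem_rotate]
  have hfixed : ∀ y ∈ Finset.univ, y ∉ (x :: l).toFinset → W y ((x :: l).formPerm y) = 0 := by
    intro y _ hy
    rw [List.formPerm_apply_of_notMem (by simpa using hy), hW]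
  calc ∑ y, W y ((x :: l).formPerm y)
      = ∑ y ∈ (x :: l).toFinset, W y ((x :: l).formPerm y) :=
        (Finset.sum_subset (Finset.subset_univ _) hfixed).symm
    _ = (List.zipWith W (x :: l) (l ++ [x])).sum := by
        rw [List.sum_toFinset _ hl, ← hnext, List.zipWith_map_right, List.zipWith_self]
    _ = pathWeight W (x :: (l ++ [x])) := by
        rw [pathWeight_cons_eq_sum_zipWith, ← List.cons_append, ← List.append_nil (l ++ [x]),
          List.zipWith_append (by simp), List.zipWith_nil_right, List.append_nil,
          List.append_nil]

variable [LinearOrder M] [IsOrderedAddMonoid M]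

lemma exists_potential (hW : ∀ x, W x x = 0)
    (hperm : ∀ σ : Equiv.Perm κ, 0 ≤ ∑ x, W x (σ x)) :
    ∃ t : κ → M, ∀ j k, t k ≤ t j + W j k := by
  have hshortest (k : κ) : ∃ p, (p ++ [k]).Nodup ∧
      ∀ q, (q ++ [k]).Nodup → pathWeight W (p ++ [k]) ≤ pathWeight W (q ++ [k]) := by
    have hfin : {p : List κ | (p ++ [k]).Nodup}.Finite :=
      (Set.finite_coe_iff.1 (inferInstanceAs (Finite {l : List κ // l.Nodup}))).subset
        fun p hp => List.Nodup.of_append_left hp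
    exact Set.exists_min_image _ (fun p => pathWeight W (p ++ [k])) hfin
      ⟨[], List.nodup_singleton k⟩
  choose p hp hmin using hshortest
  refine ⟨fun k => pathWeight W (p k ++ [k]), fun j k => ?_⟩
  have hstep : pathWeight W (p j ++ [j] ++ [k]) = pathWeight W (p j ++ [j]) + W j k := by
    rw [List.append_assoc, List.singleton_append, pathWeight_append_cons]
    simp [pathWeight]
  rw [← hstep]
  by_cases hk : k ∈ p j ++ [j]
  · obtain ⟨q, s, hqs⟩ := List.append_of_mem hk
    have hnodup := hp j
    rw [hqs] at hnodup ⊢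
    have hcycle : 0 ≤ pathWeight W (k :: (s ++ [k])) :=
      sum_formPerm_eq_pathWeight W hW hnodup.of_append_right ▸ hperm _
    have hprefix : (q ++ [k]).Nodup :=
      List.Nodup.of_append_left (l₂ := s) (by simpa using hnodup)
    rw [List.append_assoc, List.cons_append, pathWeight_append_cons]
    exact (hmin k q hprefix).trans (le_add_of_nonneg_right hcycle)
  · exact hmin k _ (List.nodup_append_comm.1 (List.nodup_cons.2 ⟨hk, hp j⟩))

end Potential

section Tables

variable {ι κ : Type*}

/-- After subtracting the constant `t j` from each column `j`, the entries within any row differ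
by at most one. -/
def IsBalancedBy (n : ι → κ → ℤ) (t : κ → ℤ) : Prop :=
  ∀ i j k, |(n i j - t j) - (n i k - t k)| ≤ 1

variable [Fintype ι] [Fintype κ]

/-- Two integer tables have the same row sums and the same column sums. -/
def SameMargins (m n : ι → κ → ℤ) : Prop :=
  (∀ i, ∑ j, m i j = ∑ j, n i j) ∧ ∀ j, ∑ i, m i j = ∑ i, n i j

/-- The sum of the squares of the entries of a table. -/
def sqSum (n : ι → κ → ℤ) : ℤ := ∑ i, ∑ j, n i j ^ 2

-- With `x = n i j - t j - b i`, which is `0` or `1`, and `y = m i j - t j - b i`, the inequality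
-- `x ^ 2 - x = 0 ≤ y ^ 2 - y` compares the squares up to multiples of `m i j - n i j` that
-- depend on `i` or on `j` alone, and these sum to zero.
lemma IsBalancedBy.sqSum_le {m n : ι → κ → ℤ} {t : κ → ℤ} (hn : IsBalancedBy n t)
    (hm : SameMargins m n) : sqSum n ≤ sqSum m := by
  rcases isEmpty_or_nonempty κ with _ | _
  · simp [sqSum]
  choose k hk using fun i => Finite.exists_min fun j => n i j - t j
  let b (i : ι) : ℤ := n i (k i) - t (k i)
  have hentry (i : ι) (j : κ) :
      n i j ^ 2 + ((2 * b i + 1) * (m i j - n i j) + 2 * t j * (m i j - n i j)) ≤ m i j ^ 2 := by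
    have hnij : n i j - t j - b i = 0 ∨ n i j - t j - b i = 1 := by
      have := hk i j
      have := (abs_le.1 (hn i j (k i))).2
      lia
    have hn0 : (n i j - t j - b i) * (n i j - t j - b i - 1) = 0 := by
      rcases hnij with h | h <;> simp [h]
    linarith [Int.le_self_sq (m i j - t j - b i)]
  have hrows : ∑ i, ∑ j, (2 * b i + 1) * (m i j - n i j) = 0 := by
    simp [← Finset.mul_sum, hm.1]
  have hcols : ∑ i, ∑ j, 2 * t j * (m i j - n i j) = 0 := by
    rw [Finset.sum_comm]
    simp [← Finset.mul_sum, hm.2]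
  calc sqSum n
      = ∑ i, ∑ j, (n i j ^ 2
          + ((2 * b i + 1) * (m i j - n i j) + 2 * t j * (m i j - n i j))) := by
        simp only [Finset.sum_add_distrib, hrows, hcols, add_zero, sqSum]
    _ ≤ sqSum m := Finset.sum_le_sum fun i _ => Finset.sum_le_sum fun j _ => hentry i j

/-- The table obtained from `n` by moving, for every column `j` at once, one unit of row `f j`
from column `j` to column `σ j`. -/
noncomputable def exchange (n : ι → κ → ℤ) (f : κ → ι) (σ : Equiv.Perm κ) (i : ι) (j : κ) : ℤ :=
  n i j + ((if i = f (σ.symm j) then 1 else 0) - if i = f j then 1 else 0)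

lemma sameMargins_exchange (n : ι → κ → ℤ) (f : κ → ι) (σ : Equiv.Perm κ) :
    SameMargins (exchange n f σ) n := by
  refine ⟨fun i => ?_, fun j => ?_⟩
  · have hσ := Equiv.sum_comp σ.symm fun j => if i = f j then (1 : ℤ) else 0
    simp only [exchange, Finset.sum_add_distrib, Finset.sum_sub_distrib, hσ, sub_self, add_zero]
  · simp [exchange, Finset.sum_add_distrib]

lemma sqSum_exchange_le (n : ι → κ → ℤ) (f : κ → ι) (σ : Equiv.Perm κ) :
    sqSum (exchange n f σ) ≤
      sqSum n + 2 * ∑ j, (n (f j) (σ j) - n (f j) j + if j = σ j then 0 else 1) := by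
  have hcol (j : κ) : ∑ i, exchange n f σ i j ^ 2 ≤ ∑ i, n i j ^ 2 +
      2 * (n (f (σ.symm j)) j - n (f j) j + if σ.symm j = j then 0 else 1) := by
    by_cases hj : σ.symm j = j
    · simp [exchange, hj]
    have hentry (i : ι) : exchange n f σ i j ^ 2 ≤ n i j ^ 2 +
        ((if i = f (σ.symm j) then 2 * n i j + 1 else 0) -
          if i = f j then 2 * n i j - 1 else 0) := by
      unfold exchange
      split_ifs <;> linarith
    refine (Finset.sum_le_sum fun i _ => hentry i).trans_eq ?_
    simp only [Finset.sum_add_distrib, Finset.sum_sub_distrib, Finset.sum_ite_eq',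
      Finset.mem_univ, if_true, if_neg hj]
    ring
  have hσ := Equiv.sum_comp σ fun j => n (f (σ.symm j)) j + if σ.symm j = j then 0 else 1
  simp only [Equiv.symm_apply_apply] at hσ
  unfold sqSum
  rw [Finset.sum_comm, Finset.sum_comm (f := fun i j => n i j ^ 2)]
  refine (Finset.sum_le_sum fun j _ => hcol j).trans_eq ?_
  rw [Finset.sum_add_distrib, ← Finset.mul_sum]
  simp only [Finset.sum_add_distrib, Finset.sum_sub_distrib] at hσ ⊢
  linarith

lemma exists_isBalancedBy_of_sqSum_le {n : ι → κ → ℤ}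
    (hmin : ∀ m, SameMargins m n → sqSum n ≤ sqSum m) : ∃ t, IsBalancedBy n t := by
  rcases isEmpty_or_nonempty ι with _ | _
  · exact ⟨0, fun i => isEmptyElim i⟩
  choose F hF using fun j k => Finite.exists_min fun i => n i k - n i j
  have hperm (σ : Equiv.Perm κ) :
      0 ≤ ∑ j, (n (F j (σ j)) (σ j) - n (F j (σ j)) j + if j = σ j then 0 else 1) := by
    have := hmin _ (sameMargins_exchange n (fun j => F j (σ j)) σ)
    linarith [sqSum_exchange_le n (fun j => F j (σ j)) σ]
  obtain ⟨t, ht⟩ := exists_potential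
    (fun j k => n (F j k) k - n (F j k) j + if j = k then 0 else 1) (by simp) hperm
  have hle (i : ι) (j k : κ) : (n i j - t j) - (n i k - t k) ≤ 1 := by
    have := ht j k
    have := hF j k i
    split_ifs at * <;> linarith
  refine ⟨t, fun i j k => abs_le.2 ⟨?_, hle i j k⟩⟩
  linarith [hle i k j]

theorem forall_sqSum_le_iff_exists_isBalancedBy (n : ι → κ → ℤ) :
    (∀ m, SameMargins m n → sqSum n ≤ sqSum m) ↔ ∃ t, IsBalancedBy n t :=
  ⟨exists_isBalancedBy_of_sqSum_le, fun ⟨_, ht⟩ _ hm => ht.sqSum_le hm⟩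

end Tables

section Runners

open scoped Finset

variable (e : ℕ) [NeZero e]

lemma card_Ioc_filter_modEq {x y : ℤ} (hxy : x ≤ y) (i : ℤ) :
    (#{z ∈ Finset.Ioc x y | z ≡ i [ZMOD e]} : ℤ) = (y - i) / e - (x - i) / e := by
  have he : (0 : ℤ) < e := mod_cast NeZero.pos e
  have hfloor (z : ℤ) : ⌊((z : ℚ) - i) / ((e : ℤ) : ℚ)⌋ = (z - i) / e := by
    exact_mod_cast Rat.floor_intCast_div_natCast (z - i) e
  rw [Int.Ioc_filter_modEq_card x y he, hfloor, hfloor, max_eq_left]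
  exact sub_nonneg.2 (Int.ediv_le_ediv he (by linarith))

lemma sub_ediv_sub_sub_add_one_ediv (x i : ℤ) :
    (x - i) / (e : ℤ) - (x - (i + 1)) / e = if x ≡ i [ZMOD e] then 1 else 0 := by
  have hcard := card_Ioc_filter_modEq e (sub_one_lt x).le i
  have hIoc : Finset.Ioc (x - 1) x = {x} := by ext; simp; lia
  rw [hIoc, Finset.filter_singleton] at hcard
  rw [show x - (i + 1) = x - 1 - i by ring, ← hcard]
  split_ifs <;> rfl

lemma mul_add_right_injective (i : ℤ) : Function.Injective fun l : ℤ => l * e + i :=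
  fun _ _ h => mul_right_cancel₀ (NeZero.ne (e : ℤ)) (add_right_cancel h)

/-- The levels of the elements of `X` on the runner through `i` of the `e`-abacus: those `l` for
which `l * e + i` belongs to `X`. -/
noncomputable def runner (X : Finset ℤ) (i : ℤ) : Finset ℤ :=
  X.preimage (fun l => l * e + i) (mul_add_right_injective e i).injOn

variable {e} in
@[simp]
lemma mem_runner {X : Finset ℤ} {i l : ℤ} : l ∈ runner e X i ↔ l * e + i ∈ X := by
  simp [runner]

lemma sum_runner {M : Type*} [AddCommMonoid M] (X : Finset ℤ) (i : ℤ) (f : ℤ → M) :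
    ∑ l ∈ runner e X i, f (l * e + i) = ∑ x ∈ X with x ≡ i [ZMOD e], f x := by
  have himage : (runner e X i).image (fun l => l * e + i) = {x ∈ X | x ≡ i [ZMOD e]} := by
    ext x
    simp only [Finset.mem_image, mem_runner, Finset.mem_filter]
    constructor
    · rintro ⟨l, hl, rfl⟩
      exact ⟨hl, by simp [Int.ModEq]⟩
    · rintro ⟨hx, hxi⟩
      obtain ⟨l, hl⟩ := hxi.symm.dvd
      have hl' : l * e + i = x := by linarith
      exact ⟨l, hl' ▸ hx, hl'⟩
  rw [← himage, Finset.sum_image (mul_add_right_injective e i).injOn]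

lemma card_runner (X : Finset ℤ) (i : ℤ) : #(runner e X i) = #{x ∈ X | x ≡ i [ZMOD e]} := by
  simpa using sum_runner e X i fun _ => (1 : ℕ)

lemma card_runner_emod (X : Finset ℤ) (i : ℤ) : #(runner e X (i % e)) = #(runner e X i) := by
  have hmod (x : ℤ) : x ≡ i % e [ZMOD e] ↔ x ≡ i [ZMOD e] := by
    simp only [Int.ModEq, Int.emod_emod]
  simp only [card_runner, hmod]

lemma sum_eq_sum_sum_runner {M : Type*} [AddCommMonoid M] (X : Finset ℤ) (f : ℤ → M) :
    ∑ x ∈ X, f x = ∑ i : Fin e, ∑ l ∈ runner e X i, f (l * e + i) := by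
  have hmod (x : ℤ) (i : Fin e) : (Int.divModEquiv e x).2 = i ↔ x ≡ i [ZMOD e] := by
    rw [← (Int.divModEquiv e).symm_apply_apply x]
    generalize Int.divModEquiv e x = y
    have hmodEq : (i : ℤ) % e = i := Int.emod_eq_of_lt (by simp) (by simp)
    have hmodEq' : (y.2 : ℤ) % e = y.2 := Int.emod_eq_of_lt (by simp) (by simp)
    rw [Equiv.apply_symm_apply, Int.divModEquiv_symm_apply, Int.ModEq, add_comm,
      Int.add_mul_emod_self_right, hmodEq, hmodEq', Nat.cast_inj, Fin.ext_iff]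
  simp only [sum_runner, ← hmod, Finset.sum_fiberwise]

lemma sum_card_runner (X : Finset ℤ) : ∑ i : Fin e, #(runner e X i) = #X := by
  simpa using (sum_eq_sum_sum_runner e X fun _ => (1 : ℕ)).symm

lemma exists_finset_runner_eq (S : Fin e → Finset ℤ) :
    ∃ X : Finset ℤ, ∀ i : Fin e, runner e X i = S i := by
  let Y : Finset (ℤ × Fin e) := Finset.univ.biUnion fun i => S i ×ˢ {i}
  refine ⟨Y.map (Int.divModEquiv e).symm.toEmbedding, fun i => Finset.ext fun l => ?_⟩
  rw [mem_runner, ← Int.divModEquiv_symm_apply e (l, i), Finset.mem_map_equiv, Equiv.symm_symm,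
    Equiv.apply_symm_apply]
  simp [Y]

/-- The sum of the levels of the elements of `X` on the `e`-abacus. -/
def levelSum (X : Finset ℤ) : ℤ := ∑ x ∈ X, x / e

lemma mul_add_ediv_of_fin (l : ℤ) (i : Fin e) : (l * e + i) / (e : ℤ) = l :=
  congrArg Prod.fst ((Int.divModEquiv e).apply_symm_apply (l, i))

lemma levelSum_eq_sum_runner (X : Finset ℤ) :
    levelSum e X = ∑ i : Fin e, ∑ l ∈ runner e X i, l := by
  simp only [levelSum, sum_eq_sum_sum_runner e X, mul_add_ediv_of_fin]

end Runners

section IntegerSums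

open scoped Finset

lemma two_mul_sum_Ico_neg {K L : ℤ} (h : -K ≤ L + 1) :
    2 * ∑ l ∈ Finset.Ico (-K) (L + 1), l = L * (L + 1) - K * (K + 1) := by
  obtain ⟨n, hn⟩ := Int.le.dest h
  obtain rfl : L = -K + n - 1 := by linarith
  clear h hn
  induction n with
  | zero => simp; ring
  | succ n ih =>
    have hIco : Finset.Ico (-K) (-K + (n + 1 : ℕ) - 1 + 1) =
        insert (-K + n : ℤ) (Finset.Ico (-K) (-K + n - 1 + 1)) := by
      ext; simp
    rw [hIco, Finset.sum_insert (by simp), mul_add, ih]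
    push_cast
    ring

lemma le_two_mul_sum_of_neg_le (S : Finset ℤ) {K : ℤ} (hS : ∀ l ∈ S, -K ≤ l) :
    (#S - K - 1) * (#S - K) - K * (K + 1) ≤ 2 * ∑ l ∈ S, l := by
  induction S using Finset.induction_on_max with
  | empty => simp; linarith
  | insert m S hm ih =>
    have hnot : m ∉ S := fun h => (hm m h).false
    have hmK : -K ≤ m := hS m (Finset.mem_insert_self _ _)
    have hcard : (#S : ℤ) ≤ m + K := by
      have hsub : S ⊆ Finset.Ico (-K) m := fun l hl =>
        Finset.mem_Ico.2 ⟨hS l (Finset.mem_insert_of_mem hl), hm l hl⟩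
      have := Finset.card_le_card hsub
      rw [Int.card_Ico] at this
      lia
    have hrec := ih fun l hl => hS l (Finset.mem_insert_of_mem hl)
    rw [Finset.card_insert_of_notMem hnot, Finset.sum_insert hnot]
    push_cast
    linarith

end IntegerSums

section Beads

open scoped Finset

/-- The β-number of row `b` (counted from `0`) of a partition of charge `a`. -/
def betaNumber (a : ℤ) (p : PartitionFun) (b : ℕ) : ℤ := p.part b + a - (b + 1)

/-- The partition has no nonempty row from row `N` (counted from `0`) on. -/
def HasLengthLE (p : PartitionFun) (N : ℕ) : Prop := ∀ b, N ≤ b → p.part b = 0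

/-- The β-numbers of the first `N` rows of a partition of charge `a`. -/
noncomputable def beads (a : ℤ) (p : PartitionFun) (N : ℕ) : Finset ℤ :=
  (Finset.range N).image (betaNumber a p)

variable {a : ℤ} {p : PartitionFun} {N : ℕ}

lemma betaNumber_strictAnti (a : ℤ) (p : PartitionFun) : StrictAnti (betaNumber a p) := by
  intro b c hbc
  have := p.antitone hbc.le
  unfold betaNumber
  lia

lemma sum_beads {M : Type*} [AddCommMonoid M] (f : ℤ → M) :
    ∑ x ∈ beads a p N, f x = ∑ b ∈ Finset.range N, f (betaNumber a p b) :=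
  Finset.sum_image (betaNumber_strictAnti a p).injective.injOn

lemma card_beads (a : ℤ) (p : PartitionFun) (N : ℕ) : #(beads a p N) = N := by
  simpa using sum_beads (a := a) (p := p) (N := N) fun _ => (1 : ℕ)

lemma sub_le_of_mem_beads {x : ℤ} (hx : x ∈ beads a p N) : a - N ≤ x := by
  obtain ⟨b, hb, rfl⟩ := Finset.mem_image.1 hx
  have := Finset.mem_range.1 hb
  unfold betaNumber
  lia

lemma HasLengthLE.betaNumber_eq (hN : HasLengthLE p N) {b : ℕ} (hb : N ≤ b) :
    betaNumber a p b = a - (b + 1) := by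
  simp [betaNumber, hN b hb]

lemma HasLengthLE.mem_betaSet_iff (hN : HasLengthLE p N) {x : ℤ} :
    x ∈ betaSet a p ↔ x < a - N ∨ x ∈ beads a p N := by
  simp only [beads, Finset.mem_image, Finset.mem_range]
  constructor
  · rintro ⟨b, hx⟩
    rcases lt_or_ge b N with hb | hb
    · exact Or.inr ⟨b, hb, hx.symm⟩
    · rw [hN b hb] at hx
      left
      lia
  · rintro (hx | ⟨b, -, hx⟩)
    · refine ⟨(a - 1 - x).toNat, ?_⟩
      rw [hN _ (by lia)]
      lia
    · exact ⟨b, hx.symm⟩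

/-- The partition obtained from `p` by adding a new first row of length `m`. -/
def consRow (m : ℕ) (p : PartitionFun) (hm : p.part 0 ≤ m) : PartitionFun where
  part
    | 0 => m
    | b + 1 => p.part b
  antitone := antitone_nat_of_succ_le fun
    | 0 => hm
    | b + 1 => p.antitone b.le_succ
  finite_support := by
    obtain ⟨N, hN⟩ := p.finite_support
    exact ⟨N + 1, fun | b + 1, hb => hN b (by lia)⟩

lemma beads_consRow {m : ℕ} (hm : p.part 0 ≤ m) :
    beads a (consRow m p hm) (N + 1) = insert (m + a - 1) (beads (a - 1) p N) := by
  have hfirst : betaNumber a (consRow m p hm) 0 = m + a - 1 := by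
    simp [betaNumber, consRow]
  have hrest : betaNumber a (consRow m p hm) ∘ Nat.succ = betaNumber (a - 1) p := by
    ext b
    simp only [betaNumber, consRow, Function.comp_apply]
    lia
  rw [beads, Finset.range_add_one', Finset.image_insert, hfirst, Finset.map_eq_image,
    Finset.image_image]
  exact congrArg (insert _ <| Finset.image · _) hrest

lemma HasLengthLE.consRow (hN : HasLengthLE p N) {m : ℕ} (hm : p.part 0 ≤ m) :
    HasLengthLE (consRow m p hm) (N + 1)
  | b + 1, hb => hN b (by lia)

lemma exists_hasLengthLE_beads_eq (X : Finset ℤ) (hX : ∀ x ∈ X, a - #X ≤ x) :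
    ∃ p, HasLengthLE p #X ∧ beads a p #X = X := by
  induction X using Finset.induction_on_max generalizing a with
  | empty => exact ⟨⟨0, antitone_const, 0, fun _ _ => rfl⟩, fun _ _ => rfl, by simp [beads]⟩
  | insert x X hx ih =>
    have hcard : #(insert x X) = #X + 1 :=
      Finset.card_insert_of_notMem fun h => (hx x h).false
    rw [hcard] at hX ⊢
    obtain ⟨p, hp, hpX⟩ := ih (a := a - 1) fun y hy => by
      have := hX y (Finset.mem_insert_of_mem hy)
      lia
    have hlt : betaNumber (a - 1) p 0 < x := by
      rcases Nat.eq_zero_or_pos #X with h0 | h0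
      · have := hX x (Finset.mem_insert_self _ _)
        rw [hp.betaNumber_eq h0.le]
        lia
      · have hmem : betaNumber (a - 1) p 0 ∈ beads (a - 1) p #X :=
          Finset.mem_image_of_mem _ (Finset.mem_range.2 h0)
        rw [hpX] at hmem
        exact hx _ hmem
    unfold betaNumber at hlt
    refine ⟨consRow (x - a + 1).toNat p (by lia), hp.consRow _, ?_⟩
    rw [beads_consRow, hpX]
    congr 1
    lia

end Beads

section HubAndWeight

open scoped Finset

lemma ncard_setOf_snd_eq {β : Type*} {P : ℕ → Prop} [DecidablePred P] (f : ℕ → β)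
    {N : ℕ} (hP : ∀ b, P b → b < N) :
    {x : ℕ × β | P x.1 ∧ x.2 = f x.1}.ncard = #{b ∈ Finset.range N | P b} := by
  have himage : {x : ℕ × β | P x.1 ∧ x.2 = f x.1} =
      (fun b => (b, f b)) '' ({b ∈ Finset.range N | P b} : Finset ℕ) := by
    ext ⟨b, c⟩
    have := hP b
    simp only [Set.mem_ofPred_eq, Finset.coe_filter, Finset.mem_range, Set.mem_image]
    grind
  rw [himage, Set.ncard_image_of_injective _ fun b c h => (Prod.ext_iff.1 h).1,
    Set.ncard_coe_finset]

variable {e r : ℕ} {a : Fin r → ℤ} {lam mu : Multipartition r}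

lemma removableCount_eq {j : Fin r} {N : ℕ} (hN : HasLengthLE (lam j) N) (i : ℤ) :
    removableCount e a lam i j = #{b ∈ Finset.range N |
      (lam j).part (b + 1) < (lam j).part b ∧ betaNumber (a j) (lam j) b ≡ i [ZMOD e]} := by
  rw [removableCount, ← ncard_setOf_snd_eq fun b => (lam j).part b - 1]
  · congr 1
    ext ⟨b, c⟩
    have hdiag : (lam j).Removable b c ↔
        (lam j).part (b + 1) < (lam j).part b ∧ c = (lam j).part b - 1 := by
      unfold PartitionFun.Removable
      lia
    simp only [Set.mem_ofPred_eq, hdiag]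
    rw [and_right_comm]
    refine and_congr_left fun hc => and_congr_right fun hlt => ?_
    rw [Int.ModEq, betaNumber, show a j + c - b = (lam j).part b + a j - (b + 1) by lia]
  · rintro b ⟨hlt, -⟩
    have := hN b
    lia

lemma addableCount_eq {j : Fin r} {N : ℕ} (hN : HasLengthLE (lam j) N) (i : ℤ) :
    addableCount e a lam i j = #{b ∈ Finset.range (N + 1) |
      (b = 0 ∨ (lam j).part b < (lam j).part (b - 1)) ∧
        betaNumber (a j) (lam j) b + 1 ≡ i [ZMOD e]} := by
  rw [addableCount, ← ncard_setOf_snd_eq (lam j).part]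
  · congr 1
    ext ⟨b, c⟩
    simp only [Set.mem_ofPred_eq, PartitionFun.Addable, and_comm (b := c = _), ← and_assoc,
      eq_comm (a := (lam j).part b)]
    rw [and_assoc, and_assoc]
    refine and_congr_right fun hc => and_congr_right fun _ => ?_
    rw [Int.ModEq, betaNumber, show a j + c - b = (lam j).part b + a j - (b + 1) + 1 by lia]
  · rintro b ⟨hlt, -⟩
    have := hN (b - 1)
    lia

-- Consecutive rows `b`, `b + 1` of equal length satisfy `betaNumber b = betaNumber (b + 1) + 1`,
-- so including them in the two sums changes nothing, and then the difference telescopes.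
lemma sum_removable_sub_sum_addable {a : ℤ} {p : PartitionFun} {N : ℕ} (hN : HasLengthLE p N)
    (f : ℤ → ℤ) :
    ∑ b ∈ Finset.range N with p.part (b + 1) < p.part b, f (betaNumber a p b) -
        ∑ b ∈ Finset.range (N + 1) with b = 0 ∨ p.part b < p.part (b - 1),
          f (betaNumber a p b + 1) =
      ∑ x ∈ beads a p N, f x - ∑ x ∈ beads a p N, f (x + 1) - f (a - N) := by
  have hrow (b : ℕ) :
      ((if p.part (b + 1) < p.part b then f (betaNumber a p b) else 0) -
          if p.part (b + 1) < p.part b then f (betaNumber a p (b + 1) + 1) else 0) =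
        f (betaNumber a p b) - f (betaNumber a p (b + 1) + 1) := by
    split_ifs with hlt
    · rfl
    · have hanti := p.antitone b.le_succ
      have hβ : betaNumber a p (b + 1) + 1 = betaNumber a p b := by
        unfold betaNumber
        lia
      rw [hβ, sub_self, sub_self]
  have hshift : ∑ b ∈ Finset.range N, f (betaNumber a p (b + 1) + 1) + f (betaNumber a p 0 + 1) =
      ∑ b ∈ Finset.range N, f (betaNumber a p b + 1) + f (a - N) := by
    rw [← Finset.sum_range_succ' fun b => f (betaNumber a p b + 1), Finset.sum_range_succ,
      hN.betaNumber_eq le_rfl]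
    ring_nf
  have hdiff := Finset.sum_congr rfl fun b (_ : b ∈ Finset.range N) => hrow b
  rw [Finset.sum_sub_distrib, Finset.sum_sub_distrib] at hdiff
  rw [sum_beads, sum_beads, Finset.sum_filter, Finset.sum_filter, Finset.sum_range_succ']
  simp only [Nat.add_eq_zero_iff, one_ne_zero, and_false, false_or, Nat.add_sub_cancel, true_or,
    if_true]
  linarith

lemma delta_eq [NeZero e] {j : Fin r} {N : ℕ} (hN : HasLengthLE (lam j) N) (i : ℤ) :
    delta e a lam i j =
      #(runner e (beads (a j) (lam j) N) i) - #(runner e (beads (a j) (lam j) N) (i - 1)) -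
        if a j - N ≡ i [ZMOD e] then 1 else 0 := by
  have hshift (x : ℤ) : x + 1 ≡ i [ZMOD e] ↔ x ≡ i - 1 [ZMOD e] := by
    rw [Int.modEq_iff_dvd, Int.modEq_iff_dvd, show i - 1 - x = i - (x + 1) by ring]
  have hsum := sum_removable_sub_sum_addable (a := a j) hN fun x => if x ≡ i [ZMOD e] then 1 else 0
  simp only [hshift, ← Finset.sum_filter, Finset.filter_filter] at hsum
  simpa [delta, removableCount_eq hN, addableCount_eq hN, card_runner, hshift] using hsum

variable {N : Fin r → ℕ}

lemma hub_eq [NeZero e] (hN : ∀ j, HasLengthLE (lam j) (N j)) (i : ℤ) :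
    hub e a lam i = ∑ j, (#(runner e (beads (a j) (lam j) (N j)) i) : ℤ) -
      ∑ j, (#(runner e (beads (a j) (lam j) (N j)) (i - 1)) : ℤ) -
        ∑ j, if a j - N j ≡ i [ZMOD e] then 1 else 0 := by
  simp only [hub, delta_eq (hN _), Finset.sum_sub_distrib]

lemma eq_apply_zero_of_forall_eq_add_one {M : Type*} {D : ℤ → M} (hD : ∀ i, D i = D (i + 1))
    (i : ℤ) : D i = D 0 := by
  induction i with
  | zero => rfl
  | succ n ih => rw [← hD, ih]
  | pred n ih => rw [hD, sub_add_cancel, ih]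

lemma sameHub_iff [NeZero e] (hlam : ∀ j, HasLengthLE (lam j) (N j))
    (hmu : ∀ j, HasLengthLE (mu j) (N j)) :
    SameHub e a lam mu ↔ ∀ i : ℤ, ∑ j, #(runner e (beads (a j) (lam j) (N j)) i) =
      ∑ j, #(runner e (beads (a j) (mu j) (N j)) i) := by
  zify
  constructor
  · intro h
    let D (i : ℤ) : ℤ := ∑ j, (#(runner e (beads (a j) (lam j) (N j)) i) : ℤ) -
      ∑ j, (#(runner e (beads (a j) (mu j) (N j)) i) : ℤ)
    have hstep (i : ℤ) : D i = D (i + 1) := by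
      have := h (i + 1)
      rw [hub_eq hlam, hub_eq hmu, add_sub_cancel_right] at this
      simp only [D]
      linarith
    have hconst := eq_apply_zero_of_forall_eq_add_one hstep
    have hsum : ∑ i : Fin e, D i = 0 := by
      have hcard (nu : Multipartition r) :
          ∑ i : Fin e, ∑ j, (#(runner e (beads (a j) (nu j) (N j)) i) : ℤ) = ∑ j, (N j : ℤ) := by
        rw [Finset.sum_comm]
        simp only [← Nat.cast_sum, sum_card_runner, card_beads]
      simp only [D, Finset.sum_sub_distrib, hcard, sub_self]
    have hzero : D 0 = 0 := by
      simpa [hconst, NeZero.ne e] using hsum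
    exact fun i => sub_eq_zero.1 ((hconst i).trans hzero)
  · intro h i
    rw [hub_eq hlam, hub_eq hmu, h, h]

lemma nodeCount_eq_sum_card (hN : ∀ j, HasLengthLE (lam j) (N j)) (i : ℤ) :
    nodeCount e a lam i = ∑ j, ∑ b ∈ Finset.range (N j),
      #{z ∈ Finset.Ioc (a j - (b + 1)) (betaNumber (a j) (lam j) b) | z ≡ i [ZMOD e]} := by
  simp only [← Finset.card_sigma]
  rw [← Set.ncard_coe_finset]
  refine Set.ncard_congr (fun x _ => ⟨x.2.2, x.1, a x.2.2 + x.2.1 - x.1⟩) ?_ ?_ ?_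
  · rintro ⟨b, c, j⟩ ⟨hc, hres⟩
    have := hN j b
    simp only [PartitionFun.InDiag] at hc
    simp only [Finset.mem_coe, Finset.mem_sigma, Finset.mem_univ, Finset.mem_range,
      Finset.mem_filter, Finset.mem_Ioc, betaNumber, true_and]
    exact ⟨by lia, by lia, hres⟩
  · rintro ⟨b, c, j⟩ ⟨b', c', j'⟩ _ _ h
    simp only [Sigma.mk.injEq] at h
    grind
  · rintro ⟨j, b, z⟩ hz
    simp only [Finset.mem_coe, Finset.mem_sigma, Finset.mem_univ, Finset.mem_range,
      Finset.mem_filter, Finset.mem_Ioc, betaNumber, true_and] at hz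
    obtain ⟨-, ⟨hlow, hup⟩, hres⟩ := hz
    have hcol : a j + ((z - a j + b).toNat : ℤ) - b = z := by lia
    refine ⟨(b, (z - a j + b).toNat, j), ⟨?_, ?_⟩, ?_⟩
    · simp only [PartitionFun.InDiag]
      lia
    · rwa [hcol]
    · simp only [hcol]

lemma nodeCount_eq [NeZero e] (hN : ∀ j, HasLengthLE (lam j) (N j)) (i : ℤ) :
    (nodeCount e a lam i : ℤ) = ∑ j, ∑ x ∈ beads (a j) (lam j) (N j), (x - i) / e -
      ∑ j, ∑ b ∈ Finset.range (N j), (a j - (b + 1) - i) / e := by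
  have hrow (j : Fin r) (b : ℕ) : a j - (b + 1) ≤ betaNumber (a j) (lam j) b := by
    unfold betaNumber
    lia
  simp only [nodeCount_eq_sum_card hN, Nat.cast_sum, card_Ioc_filter_modEq e (hrow _ _), sum_beads,
    Finset.sum_sub_distrib]

lemma nodeCount_sub_nodeCount_add_one [NeZero e] (hN : ∀ j, HasLengthLE (lam j) (N j)) (i : ℤ) :
    (nodeCount e a lam i : ℤ) - nodeCount e a lam (i + 1) =
      ∑ j, (#(runner e (beads (a j) (lam j) (N j)) i) : ℤ) -
        ∑ j, ∑ b ∈ Finset.range (N j), if a j - (b + 1) ≡ i [ZMOD e] then 1 else 0 := by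
  rw [nodeCount_eq hN, nodeCount_eq hN, sub_sub_sub_comm]
  simp only [← Finset.sum_sub_distrib, sub_ediv_sub_sub_add_one_ediv, card_runner,
    Finset.sum_boole]

lemma SameHub.nodeCount_sub_nodeCount_add_one [NeZero e] (hhub : SameHub e a lam mu)
    (hlam : ∀ j, HasLengthLE (lam j) (N j)) (hmu : ∀ j, HasLengthLE (mu j) (N j)) (i : ℤ) :
    (nodeCount e a lam i : ℤ) - nodeCount e a lam (i + 1) =
      nodeCount e a mu i - nodeCount e a mu (i + 1) := by
  have hrow := (sameHub_iff hlam hmu).1 hhub i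
  zify at hrow
  rw [AK.nodeCount_sub_nodeCount_add_one hlam, AK.nodeCount_sub_nodeCount_add_one hmu, hrow]

lemma SameHub.nodeCount_sub_nodeCount [NeZero e] (hhub : SameHub e a lam mu)
    (hlam : ∀ j, HasLengthLE (lam j) (N j)) (hmu : ∀ j, HasLengthLE (mu j) (N j)) (i : ℤ) :
    (nodeCount e a lam i : ℤ) - nodeCount e a mu i =
      ∑ j, levelSum e (beads (a j) (lam j) (N j)) -
        ∑ j, levelSum e (beads (a j) (mu j) (N j)) := by
  have hstep (i : ℤ) : (nodeCount e a lam i : ℤ) - nodeCount e a mu i =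
      nodeCount e a lam (i + 1) - nodeCount e a mu (i + 1) := by
    linarith [hhub.nodeCount_sub_nodeCount_add_one hlam hmu i]
  rw [eq_apply_zero_of_forall_eq_add_one hstep i, nodeCount_eq hlam, nodeCount_eq hmu,
    sub_sub_sub_cancel_right]
  simp only [sub_zero, levelSum]

lemma SameHub.weight_sub_weight [NeZero e] (hhub : SameHub e a lam mu)
    (hlam : ∀ j, HasLengthLE (lam j) (N j)) (hmu : ∀ j, HasLengthLE (mu j) (N j)) :
    weight e a lam - weight e a mu =
      r * ((∑ j, levelSum e (beads (a j) (lam j) (N j)) -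
        ∑ j, levelSum e (beads (a j) (mu j) (N j)) : ℤ) : ℚ) := by
  have hsquares (i : ℤ) : (nodeCount e a lam i : ℚ) - nodeCount e a lam (i + 1) =
      nodeCount e a mu i - nodeCount e a mu (i + 1) :=
    mod_cast hhub.nodeCount_sub_nodeCount_add_one hlam hmu i
  have hconst (i : ℤ) : (nodeCount e a lam i : ℚ) - nodeCount e a mu i =
      (∑ j, levelSum e (beads (a j) (lam j) (N j)) -
        ∑ j, levelSum e (beads (a j) (mu j) (N j)) : ℤ) :=
    mod_cast hhub.nodeCount_sub_nodeCount hlam hmu i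
  simp only [weight, hsquares]
  rw [sub_sub_sub_cancel_right, ← Finset.sum_sub_distrib]
  simp only [hconst, Finset.sum_const, Finset.card_univ, Fintype.card_fin, nsmul_eq_mul]

end HubAndWeight

section Levels

open scoped Finset
open Filter

variable {e : ℕ} {a K : ℤ} {p : PartitionFun}

lemma bddAbove_betaSet (a : ℤ) (p : PartitionFun) : BddAbove (betaSet a p) := by
  refine ⟨betaNumber a p 0, ?_⟩
  rintro x ⟨b, rfl⟩
  exact (betaNumber_strictAnti a p).antitone b.zero_le

lemma mem_betaSet_add_iff {c x : ℤ} : x + c ∈ betaSet (a + c) p ↔ x ∈ betaSet a p :=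
  exists_congr fun b => by lia

/-- The number of rows of a partition of charge `a` to be recorded on the `e`-abacus in order that
the β-numbers of the remaining, empty, rows are the integers below `-K * e`, that is, those at the
levels below `-K`. This has its meaning only if `a + K * e` is not negative. -/
def rowCount (e : ℕ) (a K : ℤ) : ℕ := (a + K * e).toNat

/-- The level `-K` is low enough that every level below it of the `e`-abacus of `p` is full. -/
def IsTruncation (e : ℕ) (a : ℤ) (p : PartitionFun) (K : ℤ) : Prop :=
  0 ≤ a + K * e ∧ HasLengthLE p (rowCount e a K)

lemma IsTruncation.natCast_rowCount (hK : IsTruncation e a p K) :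
    (rowCount e a K : ℤ) = a + K * e :=
  Int.toNat_of_nonneg hK.1

lemma mul_add_lt_neg_mul_iff {l : ℤ} {i : Fin e} : l * e + i < -K * e ↔ l < -K := by
  have := i.isLt
  constructor <;> intro h <;> nlinarith

variable [NeZero e]

lemma isGreatest_level (a : ℤ) (p : PartitionFun) (i : ℕ) :
    IsGreatest {l : ℤ | l * e + i ∈ betaSet a p} (level e a p i) := by
  have he : (0 : ℤ) < e := mod_cast NeZero.pos e
  have hnonempty : {l : ℤ | l * e + i ∈ betaSet a p}.Nonempty := by
    obtain ⟨N, hN⟩ := p.finite_support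
    refine ⟨-|a - N - i| - 1, (HasLengthLE.mem_betaSet_iff hN).2 (Or.inl ?_)⟩
    nlinarith [neg_abs_le (a - N - i), abs_nonneg (a - N - i)]
  have hbdd : BddAbove {l : ℤ | l * e + i ∈ betaSet a p} := by
    obtain ⟨B, hB⟩ := bddAbove_betaSet a p
    refine ⟨|B|, fun l hl => ?_⟩
    have := hB hl
    by_contra! hlt
    nlinarith [le_abs_self B, abs_nonneg B]
  exact ⟨Int.csSup_mem hnonempty hbdd, fun l hl => le_csSup hbdd hl⟩

lemma level_add_mul (a : ℤ) (p : PartitionFun) (u : ℤ) (i : ℕ) :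
    level e (a + u * e) p i = level e a p i + u := by
  have hmem (l : ℤ) : (l + u) * e + i ∈ betaSet (a + u * e) p ↔ l * e + i ∈ betaSet a p := by
    rw [show (l + u) * e + i = l * e + i + u * e by ring, mem_betaSet_add_iff]
  obtain ⟨hgreatest_mem, hgreatest_le⟩ := isGreatest_level (e := e) a p i
  refine IsGreatest.csSup_eq ⟨(hmem _).2 hgreatest_mem, fun l hl => ?_⟩
  have : l - u ≤ level e a p i := hgreatest_le <| (hmem _).1 <| by simpa using hl
  linarith

lemma IsECore.mul_add_mem_betaSet_iff (hp : IsECore e a p) {l : ℤ} {i : ℕ} :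
    l * e + i ∈ betaSet a p ↔ l ≤ level e a p i := by
  refine ⟨fun hl => (isGreatest_level a p i).2 hl, fun hl => ?_⟩
  induction l, hl using Int.leInductionDown with
  | base => exact (isGreatest_level a p i).1
  | pred l _ ih =>
    have := hp _ ih
    rwa [show l * e + i - e = (l - 1) * e + i by ring] at this

lemma isECore_and_level_eq {m : Fin e → ℤ}
    (hm : ∀ (i : Fin e) (l : ℤ), l * e + i ∈ betaSet a p ↔ l ≤ m i) :
    IsECore e a p ∧ ∀ i : Fin e, level e a p i = m i := by
  refine ⟨fun x hx => ?_, fun i => IsGreatest.csSup_eq ⟨(hm i _).2 le_rfl, fun l => (hm i l).1⟩⟩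
  obtain ⟨⟨l, i⟩, rfl⟩ := (Int.divModEquiv e).symm.surjective x
  simp only [Int.divModEquiv_symm_apply] at hx ⊢
  have hl : l ≤ m i := (hm i l).1 hx
  have hmem := (hm i (l - 1)).2 (by linarith)
  rwa [show l * e + (i : ℕ) - e = (l - 1) * e + i by ring]

lemma eventually_isTruncation (e : ℕ) [NeZero e] (a : ℤ) (p : PartitionFun) :
    ∀ᶠ K in atTop, IsTruncation e a p K := by
  have he : (0 : ℤ) < e := mod_cast NeZero.pos e
  obtain ⟨N, hN⟩ := p.finite_support
  filter_upwards [eventually_ge_atTop |N - a|] with K hK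
  have : (N : ℤ) ≤ a + K * e := by nlinarith [le_abs_self (N - a), abs_nonneg (N - a)]
  exact ⟨by lia, fun b hb => hN b (by unfold rowCount at hb; lia)⟩

lemma IsTruncation.mem_betaSet_iff (hK : IsTruncation e a p K) {l : ℤ} {i : Fin e} :
    l * e + i ∈ betaSet a p ↔ l < -K ∨ l ∈ runner e (beads a p (rowCount e a K)) i := by
  rw [hK.2.mem_betaSet_iff, mem_runner, hK.natCast_rowCount, ← mul_add_lt_neg_mul_iff]
  ring_nf

lemma IsTruncation.neg_le_of_mem_runner (hK : IsTruncation e a p K) {l : ℤ} {i : Fin e}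
    (hl : l ∈ runner e (beads a p (rowCount e a K)) i) : -K ≤ l := by
  have := sub_le_of_mem_beads (mem_runner.1 hl)
  rw [hK.natCast_rowCount] at this
  by_contra! hlt
  linarith [(mul_add_lt_neg_mul_iff (i := i)).2 hlt]

lemma IsTruncation.neg_le_level_add_one (hK : IsTruncation e a p K) (i : Fin e) :
    -K ≤ level e a p i + 1 := by
  have hmem : (-K - 1) * e + i ∈ betaSet a p := hK.mem_betaSet_iff.2 (Or.inl (sub_one_lt _))
  linarith [(isGreatest_level a p i).2 hmem]

lemma IsECore.runner_eq (hp : IsECore e a p) (hK : IsTruncation e a p K) (i : Fin e) :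
    runner e (beads a p (rowCount e a K)) i = Finset.Ico (-K) (level e a p i + 1) := by
  ext l
  have hlevel := hp.mul_add_mem_betaSet_iff (l := l) (i := i)
  rw [hK.mem_betaSet_iff] at hlevel
  have hlow := hK.neg_le_of_mem_runner (l := l) (i := i)
  rw [Finset.mem_Ico]
  grind

lemma IsECore.card_runner (hp : IsECore e a p) (hK : IsTruncation e a p K) (i : Fin e) :
    (#(runner e (beads a p (rowCount e a K)) i) : ℤ) = level e a p i + (K + 1) := by
  have := hK.neg_le_level_add_one i
  rw [hp.runner_eq hK, Int.card_Ico]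
  lia

lemma IsECore.two_mul_levelSum (hp : IsECore e a p) (hK : IsTruncation e a p K) :
    2 * levelSum e (beads a p (rowCount e a K)) =
      ∑ i : Fin e, (level e a p i * (level e a p i + 1) - K * (K + 1)) := by
  rw [levelSum_eq_sum_runner, Finset.mul_sum]
  refine Finset.sum_congr rfl fun i _ => ?_
  rw [hp.runner_eq hK, two_mul_sum_Ico_neg (hK.neg_le_level_add_one i)]

lemma IsECore.sum_level (hp : IsECore e a p) : ∑ i : Fin e, level e a p i = a - e := by
  obtain ⟨K, hK⟩ := (eventually_isTruncation e a p).exists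
  have hcard := sum_card_runner e (beads a p (rowCount e a K))
  zify at hcard
  simp only [hp.card_runner hK, Finset.sum_add_distrib, Finset.sum_const, Finset.card_univ,
    Fintype.card_fin, nsmul_eq_mul, card_beads, hK.natCast_rowCount] at hcard
  linarith

lemma exists_isECore_level_eq {m : Fin e → ℤ} (hsum : ∑ i, m i = a - e)
    (hK : ∀ i, -K ≤ m i + 1) :
    ∃ p, IsTruncation e a p K ∧ IsECore e a p ∧ ∀ i : Fin e, level e a p i = m i := by
  obtain ⟨X, hX⟩ := exists_finset_runner_eq e fun i => Finset.Ico (-K) (m i + 1)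
  have hcard : (#X : ℤ) = a + K * e := by
    have hrow (i : Fin e) : (#(Finset.Ico (-K) (m i + 1)) : ℤ) = m i + (1 + K) := by
      have := hK i
      rw [Int.card_Ico]
      lia
    rw [← sum_card_runner e X, Nat.cast_sum]
    simp only [hX, hrow, Finset.sum_add_distrib, Finset.sum_const, Finset.card_univ,
      Fintype.card_fin, nsmul_eq_mul, hsum]
    ring
  have hlow (x : ℤ) (hx : x ∈ X) : a - #X ≤ x := by
    obtain ⟨⟨l, i⟩, rfl⟩ := (Int.divModEquiv e).symm.surjective x
    have hl := mem_runner.2 hx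
    rw [hX, Finset.mem_Ico] at hl
    have := (mul_add_lt_neg_mul_iff (i := i)).not.2 hl.1.not_gt
    simp only [Int.divModEquiv_symm_apply, hcard]
    linarith
  obtain ⟨p, hp, hbeads⟩ := exists_hasLengthLE_beads_eq X hlow
  have hrows : rowCount e a K = #X := by
    unfold rowCount
    lia
  have htrunc : IsTruncation e a p K := ⟨by lia, hrows ▸ hp⟩
  refine ⟨p, htrunc, isECore_and_level_eq fun i l => ?_⟩
  have := hK i
  rw [htrunc.mem_betaSet_iff, hrows, hbeads, hX, Finset.mem_Ico]
  lia

-- The core arises by pushing all beads up their runners as far as they go.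
lemma IsTruncation.exists_isECore (hp : IsTruncation e a p K) :
    ∃ q, IsTruncation e a q K ∧ IsECore e a q ∧
      (∀ i : Fin e, #(runner e (beads a q (rowCount e a K)) i) =
        #(runner e (beads a p (rowCount e a K)) i)) ∧
      levelSum e (beads a q (rowCount e a K)) ≤ levelSum e (beads a p (rowCount e a K)) := by
  let R (i : Fin e) : Finset ℤ := runner e (beads a p (rowCount e a K)) i
  have hsum : ∑ i, ((#(R i) : ℤ) - K - 1) = a - e := by
    have hcard := sum_card_runner e (beads a p (rowCount e a K))
    zify at hcard
    rw [card_beads, hp.natCast_rowCount] at hcard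
    simp only [Finset.sum_sub_distrib, R, hcard, Finset.sum_const, Finset.card_univ,
      Fintype.card_fin, nsmul_eq_mul]
    ring
  obtain ⟨q, hq, hcore, hlevel⟩ := exists_isECore_level_eq (K := K) hsum fun i => by lia
  refine ⟨q, hq, hcore, fun i => ?_, le_of_mul_le_mul_left ?_ (two_pos (α := ℤ))⟩
  · have := hcore.card_runner hq i
    rw [hlevel] at this
    lia
  · rw [hcore.two_mul_levelSum hq, levelSum_eq_sum_runner, Finset.mul_sum]
    refine Finset.sum_le_sum fun i _ => ?_
    have := le_two_mul_sum_of_neg_le (R i) fun l hl => hp.neg_le_of_mem_runner hl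
    rwa [hlevel, sub_add_cancel]

end Levels

section Multicores

open scoped Finset
open Filter

variable {e r : ℕ} {a : Fin r → ℤ} {lam mu : Multipartition r}

/-- The table of the levels `ℓ^a_{ij}(λ)`, with a row for each runner `i` and a column for each
component `j`. -/
noncomputable def levelTable (e : ℕ) (a : Fin r → ℤ) (lam : Multipartition r) (i : Fin e)
    (j : Fin r) : ℤ :=
  level e (a j) (lam j) i

lemma sum_level_mul_level_add_one_sub (a : Fin r → ℤ) (lam : Multipartition r) (c : ℤ) :
    ∑ j, ∑ i : Fin e, (level e (a j) (lam j) i * (level e (a j) (lam j) i + 1) - c) =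
      sqSum (levelTable e a lam) + ∑ i, ∑ j, levelTable e a lam i j - r * (e * c) := by
  rw [Finset.sum_comm]
  simp only [sqSum, levelTable, mul_add, mul_one, sq, Finset.sum_sub_distrib,
    Finset.sum_add_distrib, Finset.sum_const, Finset.card_univ, Fintype.card_fin, nsmul_eq_mul]
  ring

variable [NeZero e]

lemma eventually_forall_isTruncation (e : ℕ) [NeZero e] (a : Fin r → ℤ)
    (lam : Multipartition r) : ∀ᶠ K in atTop, ∀ j, IsTruncation e (a j) (lam j) K :=
  eventually_all.2 fun j => eventually_isTruncation e (a j) (lam j)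

lemma sameHub_iff_forall_fin {K : ℤ} (hlam : ∀ j, IsTruncation e (a j) (lam j) K)
    (hmu : ∀ j, IsTruncation e (a j) (mu j) K) :
    SameHub e a lam mu ↔
      ∀ i : Fin e, ∑ j, #(runner e (beads (a j) (lam j) (rowCount e (a j) K)) i) =
        ∑ j, #(runner e (beads (a j) (mu j) (rowCount e (a j) K)) i) := by
  rw [sameHub_iff (fun j => (hlam j).2) fun j => (hmu j).2]
  refine ⟨fun h i => h i, fun h i => ?_⟩
  have he : (0 : ℤ) < e := mod_cast NeZero.pos e
  have hi := h ⟨(i % e).toNat, by have := Int.emod_lt_of_pos i he; lia⟩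
  simpa only [Int.toNat_of_nonneg (Int.emod_nonneg i he.ne'), card_runner_emod] using hi

lemma IsMulticore.sameHub_iff (hlam : IsMulticore e a lam) (hmu : IsMulticore e a mu) :
    SameHub e a lam mu ↔ ∀ i, ∑ j, levelTable e a lam i j = ∑ j, levelTable e a mu i j := by
  obtain ⟨K, hKlam, hKmu⟩ :=
    ((eventually_forall_isTruncation e a lam).and (eventually_forall_isTruncation e a mu)).exists
  rw [sameHub_iff_forall_fin hKlam hKmu]
  zify
  simp only [(hlam _).card_runner (hKlam _), (hmu _).card_runner (hKmu _),
    Finset.sum_add_distrib, add_left_inj, levelTable]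

lemma IsMulticore.two_mul_weight_sub_weight (hlam : IsMulticore e a lam)
    (hmu : IsMulticore e a mu) (hhub : SameHub e a lam mu) :
    2 * (weight e a lam - weight e a mu) =
      r * ((sqSum (levelTable e a lam) - sqSum (levelTable e a mu) : ℤ) : ℚ) := by
  obtain ⟨K, hKlam, hKmu⟩ :=
    ((eventually_forall_isTruncation e a lam).and (eventually_forall_isTruncation e a mu)).exists
  have hrows := (hlam.sameHub_iff hmu).1 hhub
  have hlevels : 2 * (∑ j, levelSum e (beads (a j) (lam j) (rowCount e (a j) K)) -
      ∑ j, levelSum e (beads (a j) (mu j) (rowCount e (a j) K))) =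
        sqSum (levelTable e a lam) - sqSum (levelTable e a mu) := by
    rw [mul_sub, Finset.mul_sum, Finset.mul_sum]
    simp only [(hlam _).two_mul_levelSum (hKlam _), (hmu _).two_mul_levelSum (hKmu _),
      sum_level_mul_level_add_one_sub, hrows]
    ring
  rw [hhub.weight_sub_weight (fun j => (hKlam j).2) fun j => (hKmu j).2, ← hlevels]
  push_cast
  ring

lemma exists_isMulticore_levelTable_eq {m : Fin e → Fin r → ℤ}
    (hm : ∀ j, ∑ i, m i j = a j - e) : ∃ nu, IsMulticore e a nu ∧ levelTable e a nu = m := by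
  obtain ⟨K, hK⟩ : ∃ K, ∀ i j, -m i j - 1 ≤ K :=
    (eventually_all.2 fun i => eventually_all.2 fun j => eventually_ge_atTop (-m i j - 1)).exists
  choose nu _ hcore hlevel using fun j =>
    exists_isECore_level_eq (K := K) (hm j) fun i => by linarith [hK i j]
  exact ⟨nu, hcore, funext fun i => funext fun j => hlevel j i⟩

lemma exists_isMulticore_weight_le (e : ℕ) [NeZero e] (a : Fin r → ℤ) (mu : Multipartition r) :
    ∃ nu, IsMulticore e a nu ∧ SameHub e a mu nu ∧ weight e a nu ≤ weight e a mu := by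
  obtain ⟨K, hmu⟩ := (eventually_forall_isTruncation e a mu).exists
  choose nu hnu hcore hcard hlevelSum using fun j => (hmu j).exists_isECore
  have hhub : SameHub e a mu nu := by
    rw [sameHub_iff_forall_fin hmu hnu]
    simp only [hcard, implies_true]
  refine ⟨nu, hcore, hhub, sub_nonneg.1 ?_⟩
  rw [hhub.weight_sub_weight (fun j => (hmu j).2) fun j => (hnu j).2]
  refine mul_nonneg (Nat.cast_nonneg r) (Int.cast_nonneg ?_)
  exact sub_nonneg.2 (Finset.sum_le_sum fun j _ => hlevelSum j)

lemma IsMulticore.weight_le_weight_iff (hr : 0 < r) (hlam : IsMulticore e a lam)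
    (hmu : IsMulticore e a mu) (hhub : SameHub e a lam mu) :
    weight e a lam ≤ weight e a mu ↔
      sqSum (levelTable e a lam) ≤ sqSum (levelTable e a mu) := by
  have hdiff := hmu.two_mul_weight_sub_weight hlam fun i => (hhub i).symm
  have hr' : (0 : ℚ) < r := mod_cast hr
  rw [← sub_nonneg, ← mul_nonneg_iff_of_pos_left (two_pos (α := ℚ)), hdiff,
    mul_nonneg_iff_of_pos_left hr', Int.cast_nonneg_iff, sub_nonneg]

lemma IsMulticore.minimalWeight_iff (hr : 0 < r) (hlam : IsMulticore e a lam) :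
    MinimalWeight e a lam ↔ ∀ m, SameMargins m (levelTable e a lam) →
      sqSum (levelTable e a lam) ≤ sqSum m := by
  have hcols {nu : Multipartition r} (hnu : IsMulticore e a nu) (j : Fin r) :
      ∑ i, levelTable e a nu i j = a j - e := (hnu j).sum_level
  constructor
  · rintro hmin m ⟨hrow, hcol⟩
    obtain ⟨nu, hnu, rfl⟩ := exists_isMulticore_levelTable_eq fun j =>
      (hcol j).trans (hcols hlam j)
    have hhub := (hlam.sameHub_iff hnu).2 fun i => (hrow i).symm
    exact (hlam.weight_le_weight_iff hr hnu hhub).1 (hmin nu hhub)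
  · intro hmin mu hmu
    obtain ⟨nu, hnu, hmunu, hle⟩ := exists_isMulticore_weight_le e a mu
    have hhub : SameHub e a lam nu := fun i => (hmu i).trans (hmunu i)
    have hmargins : SameMargins (levelTable e a nu) (levelTable e a lam) :=
      ⟨fun i => ((hlam.sameHub_iff hnu).1 hhub i).symm,
        fun j => (hcols hnu j).trans (hcols hlam j).symm⟩
    exact ((hlam.weight_le_weight_iff hr hnu hhub).2 (hmin _ hmargins)).trans hle

lemma isBalancedBy_levelTable_iff {t : Fin r → ℤ} :
    IsBalancedBy (levelTable e a lam) t ↔ ∀ i < e, ∀ j k,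
      |level e (a j - t j * e) (lam j) i - level e (a k - t k * e) (lam k) i| ≤ 1 := by
  simp only [IsBalancedBy, levelTable, Fin.forall_iff, sub_eq_add_neg, ← neg_mul, level_add_mul]

end Multicores

/-- Proposition 3.8: a multicore `λ` lies in a core block iff there
is a multicharge `a'` congruent to `a` componentwise mod `e` such that
`|ℓ^{a'}_{ij}(λ) − ℓ^{a'}_{ik}(λ)| ≤ 1` for every runner `i` and all components `j, k`. -/
theorem stmt_19 {e r : ℕ} (he : 2 ≤ e) (hr : 0 < r) (a : Fin r → ℤ)
    (lam : Multipartition r) (hcore : IsMulticore e a lam) :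
    MinimalWeight e a lam ↔
      ∃ a' : Fin r → ℤ, (∀ j, (e : ℤ) ∣ (a' j - a j)) ∧
        ∀ i < e, ∀ j k : Fin r,
          |level e (a' j) (lam j) i - level e (a' k) (lam k) i| ≤ 1 := by
  have : NeZero e := ⟨by lia⟩
  rw [hcore.minimalWeight_iff hr, forall_sqSum_le_iff_exists_isBalancedBy]
  constructor
  · rintro ⟨t, ht⟩
    exact ⟨fun j => a j - t j * e, fun j => ⟨-t j, by ring⟩, isBalancedBy_levelTable_iff.1 ht⟩
  · rintro ⟨a', hdvd, ha'⟩
    choose u hu using hdvd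
    obtain rfl : a' = fun j => a j - -u j * e := funext fun j => by linarith [hu j]
    exact ⟨fun j => -u j, isBalancedBy_levelTable_iff.2 ha'⟩

end AK
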